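/- Let f : ℕ → ℤ be a completely multiplicative function taking values in {-1, 1}, let σ be a real number with 1/2 < σ ≤ 1, let k ≥ 1 be an integer, and let c ∈ [-1, 1] be nonzero. Suppose that ∑_{p ≤ x} f(p) = c · x^σ / (log x · log₂ x ··· log_k x) · (1 + o(1)) as x → ∞, where log_j x denotes the j-fold iterated logarithm (log_1 x = log x) and the sum runs over primes p. If c > 0 then the partial sums of f are unbounded, lim sup_{N→∞} |∑_{n=1}^{N} f(n)| = ∞; and if c < 0 then the partial sums of μ·f are unbounded, lim sup_{N→∞} |∑_{n=1}^{N} μ(n) f(n)| = ∞, where μ is the Möbius function. -/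

import Mathlib

open Filter Asymptotics

/-!
For `re s > 1` the Euler product gives `∑ f(n) n^(-s) = exp (∑_p f(p) p^(-s) + H(s))`, where the
contribution `H` of the higher prime powers is analytic for `re s > 1/2`. If the partial sums of
`f` were bounded, the left side would continue analytically to `re s > 0`; since
`S(x) = ∑_{p ≤ x} f(p)` is `O(x ^ σ)`, the identity would persist for `re s > σ`, with
`∑_p f(p) p^(-s)` written as `s ∫ S(t) t^(-s-1) dt`. But `1 / (t log t ⋯ log_k t)` is the derivative
of the unbounded function `log_{k+1} t`, so for `re c > 0` Fatou's lemma forces the real part of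
this integral to `+∞` as `s → σ⁺`, whereas the left side stays bounded near `σ`. For `re c < 0` the
same argument applies to `1 / ∑ f(n) n^(-s) = ∑ μ(n) f(n) n^(-s)`.
-/

section Fatou

open MeasureTheory Topology

variable {α ι : Type*} [MeasurableSpace α] {μ : Measure α} {l : Filter ι} [l.IsCountablyGenerated]
  {F : ι → α → ℝ} {f h : α → ℝ}

lemma integrable_of_tendsto_of_frequently_integral_le {M : ℝ} (hF : ∀ᶠ i in l, Integrable (F i) μ)
    (hF0 : ∀ᶠ i in l, 0 ≤ᵐ[μ] F i) (hlim : ∀ᵐ x ∂μ, Tendsto (F · x) l (𝓝 (f x)))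
    (hM : ∃ᶠ i in l, ∫ x, F i x ∂μ ≤ M) : Integrable f μ := by
  obtain ⟨u, hu, hFu⟩ := exists_seq_forall_of_frequently (hM.and_eventually (hF.and hF0))
  have hlimu : ∀ᵐ x ∂μ, Tendsto (fun n => F (u n) x) atTop (𝓝 (f x)) := by
    filter_upwards [hlim] with x hx using hx.comp hu
  refine ⟨aestronglyMeasurable_of_tendsto_ae _ (fun n => (hFu n).2.1.1) hlimu, ?_⟩
  calc ∫⁻ x, ‖f x‖ₑ ∂μ = ∫⁻ x, liminf (fun n => ‖F (u n) x‖ₑ) atTop ∂μ :=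
        lintegral_congr_ae (by filter_upwards [hlimu] with x hx using hx.enorm.liminf_eq.symm)
    _ ≤ liminf (fun n => ∫⁻ x, ‖F (u n) x‖ₑ ∂μ) atTop :=
        lintegral_liminf_le' fun n => (hFu n).2.1.1.enorm
    _ ≤ ENNReal.ofReal M := liminf_le_of_frequently_le' <| .of_forall fun n => by
        obtain ⟨hle, hint, hnonneg⟩ := hFu n
        rw [← ofReal_integral_norm_eq_lintegral_enorm hint, integral_congr_ae
          (hnonneg.mono fun x hx => Real.norm_of_nonneg hx)]
        exact ENNReal.ofReal_le_ofReal hle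
    _ < ⊤ := ENNReal.ofReal_lt_top

lemma tendsto_integral_atTop_of_not_integrable (hF : ∀ᶠ i in l, Integrable (F i) μ)
    (hh : Integrable h μ) (hFh : ∀ᶠ i in l, h ≤ᵐ[μ] F i)
    (hlim : ∀ᵐ x ∂μ, Tendsto (F · x) l (𝓝 (f x))) (hf : ¬ Integrable f μ) :
    Tendsto (fun i => ∫ x, F i x ∂μ) l atTop := by
  refine tendsto_atTop.mpr fun M => ?_
  by_contra hM
  have hbound : ∃ᶠ i in l, ∫ x, (F i - h) x ∂μ ≤ M - ∫ x, h x ∂μ := by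
    refine ((not_eventually.mp hM).and_eventually hF).mono fun i ⟨hnle, hi⟩ => ?_
    rw [integral_sub' hi hh]
    exact sub_le_sub_right (not_le.mp hnle).le _
  have hsub : Integrable (f - h) μ :=
    integrable_of_tendsto_of_frequently_integral_le (hF.mono fun i hi => hi.sub hh)
      (hFh.mono fun i hi => hi.mono fun x hx => sub_nonneg.mpr hx)
      (hlim.mono fun x hx => hx.sub_const (h x)) hbound
  exact hf (by simpa using hsub.add hh)

end Fatou

section IteratedLog

open MeasureTheory Set

/-- The product `log x · log₂ x ⋯ log_k x` of the first `k` iterated logarithms. -/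
noncomputable def iterLogProd (k : ℕ) (x : ℝ) : ℝ := ∏ j ∈ Finset.Icc 1 k, Real.log^[j] x

lemma iterLogProd_succ (k : ℕ) (x : ℝ) :
    iterLogProd (k + 1) x = iterLogProd k x * Real.log^[k + 1] x :=
  Finset.prod_Icc_succ_top (by omega) _

lemma eventually_one_le_iterLogProd (k : ℕ) : ∀ᶠ x in atTop, 1 ≤ iterLogProd k x := by
  induction k with
  | zero => simp [iterLogProd]
  | succ k ih =>
    filter_upwards [ih, (Real.tendsto_log_atTop.iterate (k + 1)).eventually_ge_atTop 1]
      with x hprod hlog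
    rw [iterLogProd_succ]
    exact one_le_mul_of_one_le_of_one_le hprod hlog

lemma eventually_hasDerivAt_log_iterate (k : ℕ) :
    ∀ᶠ x in atTop, HasDerivAt Real.log^[k + 1] (x * iterLogProd k x)⁻¹ x := by
  induction k with
  | zero =>
    filter_upwards [eventually_ne_atTop 0] with x hx
    simpa [iterLogProd] using Real.hasDerivAt_log hx
  | succ k ih =>
    filter_upwards [ih, (Real.tendsto_log_atTop.iterate (k + 1)).eventually_ne_atTop 0]
      with x hderiv hlog
    rw [Function.iterate_succ', iterLogProd_succ, ← mul_assoc, mul_inv_rev]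
    exact (Real.hasDerivAt_log hlog).comp x hderiv

lemma not_integrableOn_Ioi_of_inv_mul_iterLogProd_isBigO {E : Type*} [NormedAddCommGroup E]
    {g : ℝ → E} {k : ℕ} (hg : (fun x => (x * iterLogProd k x)⁻¹) =O[atTop] g) (a : ℝ) :
    ¬ IntegrableOn g (Ioi a) := by
  have hderiv := eventually_hasDerivAt_log_iterate k
  refine not_integrableOn_of_tendsto_norm_atTop_of_deriv_isBigO_filter (f := Real.log^[k + 1])
    atTop (Ioi_mem_atTop a) (hderiv.mono fun x hx => hx.differentiableAt) ?_ ?_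
  · exact tendsto_norm_atTop_atTop.comp (Real.tendsto_log_atTop.iterate (k + 1))
  · exact hg.congr' (hderiv.mono fun x hx => hx.deriv.symm) .rfl

lemma rpow_div_iterLogProd_isBigO (σ : ℝ) (k : ℕ) :
    (fun x : ℝ => x ^ σ / iterLogProd k x) =O[atTop] fun x : ℝ => x ^ σ := by
  refine IsBigO.of_bound' ?_
  filter_upwards [eventually_one_le_iterLogProd k] with x hx
  rw [norm_div]
  exact div_le_self (norm_nonneg _) (hx.trans (Real.le_norm_self _))

end IteratedLog

section AbelLSeries

open MeasureTheory Set Topology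

/-- The summatory function `∑_{1 ≤ n ≤ t} a n`. -/
noncomputable def summatory (a : ℕ → ℂ) (t : ℝ) : ℂ := ∑ n ∈ Finset.Icc 1 ⌊t⌋₊, a n

/-- The function `s ∫₀^∞ S(t) t^(-s-1) dt`, with `S` the summatory function of `a`: it continues
the L-series of `a` to every half-plane `r < re s` such that `S(t) = O(t ^ r)`. -/
noncomputable def abelLSeries (a : ℕ → ℂ) (s : ℂ) : ℂ := s * mellin (summatory a) (-s)

variable {a : ℕ → ℂ} {r : ℝ} {s : ℂ}

lemma summatory_neg (a : ℕ → ℂ) : summatory (-a) = -summatory a := by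
  ext t
  simp [summatory]

lemma summatory_indicator_primes (f : ℕ → ℂ) (t : ℝ) :
    summatory ({p | p.Prime}.indicator f) t = ∑ p ∈ Nat.primesBelow (⌊t⌋₊ + 1), f p := by
  have hset : Nat.primesBelow (⌊t⌋₊ + 1) = {n ∈ Finset.Icc 1 ⌊t⌋₊ | n.Prime} := by
    ext n
    simp only [Nat.mem_primesBelow, Finset.mem_filter, Finset.mem_Icc, Nat.lt_succ_iff]
    exact ⟨fun h => ⟨⟨h.2.pos, h.1⟩, h.2⟩, fun h => ⟨h.1.2, h.2⟩⟩
  rw [hset, Finset.sum_filter, summatory]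
  exact Finset.sum_congr rfl fun n _ => indicator_apply ..

lemma summatory_of_lt_one (a : ℕ → ℂ) {t : ℝ} (ht : t < 1) : summatory a t = 0 := by
  simp [summatory, Nat.floor_eq_zero.mpr ht]

lemma locallyIntegrableOn_summatory (a : ℕ → ℂ) : LocallyIntegrableOn (summatory a) (Ici 0) := by
  simpa only [one_mul] using! locallyIntegrableOn_mul_sum_Icc (m := 1) a le_rfl
    ((locallyIntegrable_const (1 : ℂ)).locallyIntegrableOn (Ici 0))

lemma summatory_isBigO_nhdsGT_zero (a : ℕ → ℂ) (g : ℝ → ℝ) : summatory a =O[𝓝[>] 0] g := by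
  refine (isBigO_zero g _).congr' ?_ .rfl
  filter_upwards [nhdsWithin_le_nhds (eventually_lt_nhds zero_lt_one)] with t ht
  rw [summatory_of_lt_one a ht]

lemma mellinConvergent_summatory (hO : summatory a =O[atTop] fun t => t ^ r) (hs : r < s.re) :
    MellinConvergent (summatory a) (-s) :=
  mellinConvergent_of_isBigO_rpow (a := -r)
    ((locallyIntegrableOn_summatory a).mono_set Ioi_subset_Ici_self) (by simpa using hO)
    (by simpa using hs) (summatory_isBigO_nhdsGT_zero a _) (sub_one_lt _)

lemma differentiableAt_abelLSeries (hO : summatory a =O[atTop] fun t => t ^ r) (hs : r < s.re) :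
    DifferentiableAt ℂ (abelLSeries a) s := by
  have hmellin : DifferentiableAt ℂ (mellin (summatory a)) (-s) :=
    mellin_differentiableAt_of_isBigO_rpow (a := -r)
      ((locallyIntegrableOn_summatory a).mono_set Ioi_subset_Ici_self) (by simpa using hO)
      (by simpa using hs) (summatory_isBigO_nhdsGT_zero a _) (sub_one_lt _)
  exact differentiableAt_id.mul (hmellin.comp s differentiableAt_id.neg)

lemma mellin_summatory_eq_integral_Ioi_one (a : ℕ → ℂ) (s : ℂ) :
    mellin (summatory a) (-s) = ∫ t in Ioi (1 : ℝ), summatory a t * (t : ℂ) ^ (-(s + 1)) := by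
  rw [mellin, ← integral_Ici_eq_integral_Ioi (x := (1 : ℝ))]
  refine (setIntegral_eq_of_subset_of_forall_sdiff_eq_zero measurableSet_Ioi
    (Ici_subset_Ioi.mpr zero_lt_one) fun t ht => ?_).trans ?_
  · rw [summatory_of_lt_one a (not_le.mp ht.2), smul_zero]
  · simp only [smul_eq_mul, mul_comm, neg_add']

lemma LSeries_eq_abelLSeries (hr : 0 ≤ r) (hO : summatory a =O[atTop] fun t => t ^ r)
    (hs : r < s.re) (hS : LSeriesSummable a s) : LSeries a s = abelLSeries a s := by
  have hOnat : (fun n : ℕ => ∑ k ∈ Finset.Icc 1 n, a k) =O[atTop] fun n => (n : ℝ) ^ r :=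
    (hO.comp_tendsto tendsto_natCast_atTop_atTop).congr_left fun n => by simp [summatory]
  rw [LSeries_eq_mul_integral a hr hs hS hOnat, abelLSeries, mellin_summatory_eq_integral_Ioi_one]
  rfl

lemma abelLSeries_eqOn_of_LSeries_eq {G : ℂ → ℂ} {x : ℝ} (hr : 0 ≤ r)
    (hO : summatory a =O[atTop] fun t => t ^ r) (hS : ∀ s : ℂ, x < s.re → LSeriesSummable a s)
    (hG : DifferentiableOn ℂ G {s | r < s.re}) (h : ∀ s : ℂ, x < s.re → LSeries a s = G s) :
    EqOn (abelLSeries a) G {s | r < s.re} := by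
  have hopen (y : ℝ) : IsOpen {s : ℂ | y < s.re} := isOpen_lt continuous_const Complex.continuous_re
  have habel : DifferentiableOn ℂ (abelLSeries a) {s | r < s.re} := fun s hs =>
    (differentiableAt_abelLSeries hO hs).differentiableWithinAt
  obtain ⟨z, hz⟩ := exists_gt (max x r)
  refine (habel.analyticOnNhd (hopen r)).eqOn_of_preconnected_of_eventuallyEq
    (hG.analyticOnNhd (hopen r)) (convex_halfSpace_re_gt r).isPreconnected
    (z₀ := z) ((le_max_right x r).trans_lt hz) ?_
  filter_upwards [(hopen (max x r)).mem_nhds hz] with s hs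
  have hxs : x < s.re := (le_max_left x r).trans_lt hs
  rw [← h s hxs, LSeries_eq_abelLSeries hr hO ((le_max_right x r).trans_lt hs) (hS s hxs)]

lemma re_ofReal_cpow_smul {t : ℝ} (ht : 0 ≤ t) (s : ℝ) (z : ℂ) :
    ((t : ℂ) ^ (-(s : ℂ) - 1) • z).re = t ^ (-s - 1) * z.re := by
  rw [smul_eq_mul, ← Complex.re_ofReal_mul, Complex.ofReal_cpow ht]
  push_cast
  rfl

lemma integrableOn_rpow_mul_re_summatory {s : ℝ} (hO : summatory a =O[atTop] fun t => t ^ r)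
    (hs : r < s) : IntegrableOn (fun t => t ^ (-s - 1) * (summatory a t).re) (Ioi 0) :=
  IntegrableOn.congr_fun (mellinConvergent_summatory hO (s := s) hs).re
    (fun _ ht => re_ofReal_cpow_smul (le_of_lt ht) s _) measurableSet_Ioi

lemma re_abelLSeries_ofReal {s : ℝ} (hO : summatory a =O[atTop] fun t => t ^ r) (hs : r < s) :
    (abelLSeries a s).re = s * ∫ t in Ioi 0, t ^ (-s - 1) * (summatory a t).re := by
  rw [abelLSeries, Complex.re_ofReal_mul, mellin, ← RCLike.re_eq_complex_re,
    ← integral_re (mellinConvergent_summatory hO (s := s) hs)]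
  exact congrArg (s * ·) (setIntegral_congr_fun measurableSet_Ioi
    fun _ ht => re_ofReal_cpow_smul (le_of_lt ht) s _)

lemma exists_integrable_le_rpow_mul {Q : ℝ → ℝ} (hQ : LocallyIntegrableOn Q (Ici 0))
    (hQ1 : ∀ t < 1, Q t = 0) (hnonneg : ∀ᶠ t in atTop, 0 ≤ Q t) :
    ∃ h : ℝ → ℝ, Integrable h ∧ ∀ s t : ℝ, 0 < s → 0 < t → h t ≤ t ^ (-s - 1) * Q t := by
  obtain ⟨T, hT⟩ := eventually_atTop.mp hnonneg
  refine ⟨(Icc 0 T).indicator fun t => -|Q t|, IntegrableOn.integrable_indicator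
    (hQ.integrableOn_compact_subset Icc_subset_Ici_self isCompact_Icc).abs.neg measurableSet_Icc,
    fun s t hs ht => ?_⟩
  have hpow : 0 ≤ t ^ (-s - 1) := Real.rpow_nonneg ht.le _
  by_cases htT : t ∈ Icc 0 T
  · rw [indicator_of_mem htT]
    rcases lt_or_ge t 1 with ht1 | ht1
    · simp [hQ1 t ht1]
    · have hpow1 : t ^ (-s - 1) ≤ 1 := Real.rpow_le_one_of_one_le_of_nonpos ht1 (by linarith)
      calc -|Q t| ≤ -(t ^ (-s - 1) * |Q t|) :=
            neg_le_neg (mul_le_of_le_one_left (abs_nonneg _) hpow1)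
        _ = t ^ (-s - 1) * -|Q t| := by ring
        _ ≤ t ^ (-s - 1) * Q t := mul_le_mul_of_nonneg_left (neg_abs_le _) hpow
  · rw [indicator_of_notMem htT]
    exact mul_nonneg hpow (hT t (not_le.mp fun hle => htT ⟨ht.le, hle⟩).le)

lemma tendsto_re_abelLSeries_atTop_of_not_integrableOn (hr : 0 < r)
    (hO : summatory a =O[atTop] fun t => t ^ r) (hnonneg : ∀ᶠ t in atTop, 0 ≤ (summatory a t).re)
    (hint : ¬ IntegrableOn (fun t => t ^ (-r - 1) * (summatory a t).re) (Ioi 0)) :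
    Tendsto (fun s : ℝ => (abelLSeries a s).re) (𝓝[>] r) atTop := by
  obtain ⟨h, hh, hle⟩ := exists_integrable_le_rpow_mul (Q := fun t => (summatory a t).re)
    (fun t ht => (locallyIntegrableOn_summatory a t ht).imp fun _ hu => ⟨hu.1, hu.2.re⟩)
    (fun t ht => by simp [summatory_of_lt_one a ht]) hnonneg
  have hlim : Tendsto (fun s : ℝ => ∫ t in Ioi 0, t ^ (-s - 1) * (summatory a t).re)
      (𝓝[>] r) atTop := by
    refine tendsto_integral_atTop_of_not_integrable ?_ hh.restrict ?_ ?_ hint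
    · filter_upwards [self_mem_nhdsWithin] with s hs
      exact integrableOn_rpow_mul_re_summatory hO hs
    · filter_upwards [self_mem_nhdsWithin] with s hs
      filter_upwards [ae_restrict_mem measurableSet_Ioi] with t ht
      exact hle s t (hr.trans hs) ht
    · filter_upwards [ae_restrict_mem measurableSet_Ioi] with t ht
      have hcont : Continuous fun s : ℝ => t ^ (-s - 1) :=
        Real.continuous_const_rpow (ne_of_gt ht) |>.comp (by fun_prop)
      exact (hcont.tendsto r |>.mono_left nhdsWithin_le_nhds).mul_const _
  refine (Tendsto.pos_mul_atTop hr (tendsto_id.mono_left nhdsWithin_le_nhds) hlim).congr' ?_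
  filter_upwards [self_mem_nhdsWithin] with s hs
  exact (re_abelLSeries_ofReal hO hs).symm

end AbelLSeries

section LogSingularity

open Set Topology

variable {b : ℕ → ℂ} {σ : ℝ} {k : ℕ} {c : ℂ}

lemma summatory_isBigO_of_asymp
    (hb : (fun t : ℝ => summatory b t - c * (t ^ σ / iterLogProd k t : ℝ))
      =o[atTop] fun t : ℝ => t ^ σ / iterLogProd k t) :
    summatory b =O[atTop] fun t : ℝ => t ^ σ := by
  have hmain : (fun t : ℝ => c * ((t ^ σ / iterLogProd k t : ℝ) : ℂ)) =O[atTop]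
      fun t : ℝ => t ^ σ / iterLogProd k t :=
    (Complex.isBigO_ofReal_left.mpr (isBigO_refl _ _)).const_mul_left c
  exact ((hb.isBigO.add hmain).congr_left fun t => sub_add_cancel _ _).trans
    (rpow_div_iterLogProd_isBigO σ k)

lemma eventually_le_re_summatory_of_asymp (hc : 0 < c.re)
    (hb : (fun t : ℝ => summatory b t - c * (t ^ σ / iterLogProd k t : ℝ))
      =o[atTop] fun t : ℝ => t ^ σ / iterLogProd k t) :
    ∀ᶠ t : ℝ in atTop, c.re / 2 * (t ^ σ / iterLogProd k t) ≤ (summatory b t).re := by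
  filter_upwards [hb.bound (half_pos hc), eventually_one_le_iterLogProd k, eventually_ge_atTop 0]
    with t hbound hlog ht
  have hre := (Complex.abs_re_le_norm _).trans hbound
  rw [Real.norm_of_nonneg (by positivity), Complex.sub_re, Complex.re_mul_ofReal] at hre
  linarith [(abs_le.mp hre).1]

lemma tendsto_re_abelLSeries_atTop_of_asymp (hσ : 0 < σ) (hc : 0 < c.re)
    (hb : (fun t : ℝ => summatory b t - c * (t ^ σ / iterLogProd k t : ℝ))
      =o[atTop] fun t : ℝ => t ^ σ / iterLogProd k t) :
    Tendsto (fun s : ℝ => (abelLSeries b s).re) (𝓝[>] σ) atTop := by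
  have hlow := eventually_le_re_summatory_of_asymp hc hb
  refine tendsto_re_abelLSeries_atTop_of_not_integrableOn hσ (summatory_isBigO_of_asymp hb) ?_
    (not_integrableOn_Ioi_of_inv_mul_iterLogProd_isBigO (k := k) (.of_bound (2 / c.re) ?_) 0)
  · filter_upwards [hlow, eventually_one_le_iterLogProd k, eventually_ge_atTop 0] with t ht hlog ht0
    exact le_trans (by positivity) ht
  · filter_upwards [hlow, eventually_one_le_iterLogProd k, eventually_gt_atTop 0] with t ht hlog ht0
    have hpow : t ^ (-σ - 1) * t ^ σ = t⁻¹ := by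
      rw [← Real.rpow_add ht0, ← Real.rpow_neg_one]
      ring_nf
    rw [Real.norm_of_nonneg (by positivity)]
    calc (t * iterLogProd k t)⁻¹
        = 2 / c.re * (t ^ (-σ - 1) * (c.re / 2 * (t ^ σ / iterLogProd k t))) := by
          rw [mul_inv, ← hpow]
          field_simp
      _ ≤ 2 / c.re * ‖t ^ (-σ - 1) * (summatory b t).re‖ := by
          gcongr
          exact (mul_le_mul_of_nonneg_left ht (by positivity)).trans (Real.le_norm_self _)

theorem exists_lt_norm_sum_of_LSeries_eq_exp {a : ℕ → ℂ} {H : ℂ → ℂ} {x : ℝ} (hσ : 0 < σ)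
    (ha : ∀ s : ℂ, x < s.re → LSeriesSummable a s) (hb : ∀ s : ℂ, x < s.re → LSeriesSummable b s)
    (hH : ∀ s : ℂ, σ ≤ s.re → DifferentiableAt ℂ H s)
    (hexp : ∀ s : ℂ, x < s.re → LSeries a s = Complex.exp (LSeries b s + H s)) (hc : 0 < c.re)
    (hasymp : (fun t : ℝ => summatory b t - c * (t ^ σ / iterLogProd k t : ℝ))
      =o[atTop] fun t : ℝ => t ^ σ / iterLogProd k t) (C : ℝ) :
    ∃ N : ℕ, C < ‖∑ n ∈ Finset.Icc 1 N, a n‖ := by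
  by_contra! hC
  have hOa : summatory a =O[atTop] fun t : ℝ => t ^ (0 : ℝ) :=
    .of_bound C (.of_forall fun t => by simpa [summatory] using hC ⌊t⌋₊)
  have hOb : summatory b =O[atTop] fun t : ℝ => t ^ σ := summatory_isBigO_of_asymp hasymp
  have hone : (fun t : ℝ => t ^ (0 : ℝ)) =O[atTop] fun t : ℝ => t ^ σ := by
    refine .of_bound' ?_
    filter_upwards [eventually_ge_atTop 1] with t ht
    simpa using (Real.one_le_rpow ht hσ.le).trans (le_abs_self _)
  have hexp' : EqOn (abelLSeries a) (fun s => Complex.exp (abelLSeries b s + H s))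
      {s | σ < s.re} := by
    refine abelLSeries_eqOn_of_LSeries_eq (x := max x σ) hσ.le
      (hOa.trans hone) (fun s hs => ha s (max_lt_iff.mp hs).1) ?_ fun s hs => ?_
    · exact fun s hs => ((differentiableAt_abelLSeries hOb hs).add
        (hH s (le_of_lt hs))).cexp.differentiableWithinAt
    · obtain ⟨hxs, hσs⟩ := max_lt_iff.mp hs
      rw [hexp s hxs, LSeries_eq_abelLSeries hσ.le hOb hσs (hb s hxs)]
  have hofReal : ContinuousAt Complex.ofReal σ := Complex.continuous_ofReal.continuousAt
  have hcont : ContinuousAt (fun s : ℝ => ‖abelLSeries a s‖ + ‖H s‖) σ :=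
    ((differentiableAt_abelLSeries hOa hσ).continuousAt.comp (f := Complex.ofReal) hofReal).norm.add
      ((hH σ le_rfl).continuousAt.comp (f := Complex.ofReal) hofReal).norm
  refine not_tendsto_atTop_of_tendsto_nhds (hcont.tendsto.mono_left nhdsWithin_le_nhds)
    (tendsto_atTop_mono' (𝓝[>] σ) ?_ (tendsto_re_abelLSeries_atTop_of_asymp hσ hc hasymp))
  filter_upwards [self_mem_nhdsWithin] with s hs
  have hnorm : (abelLSeries b s + H s).re ≤ ‖abelLSeries a s‖ := by
    rw [hexp' (show σ < (s : ℂ).re from hs), Complex.norm_exp]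
    linarith [Real.add_one_le_exp (abelLSeries b s + H s).re]
  rw [Complex.add_re] at hnorm
  linarith [neg_le_of_abs_le (Complex.abs_re_le_norm (H s))]

end LogSingularity

section EulerProduct

open Complex LSeries
open scoped LSeries.notation ArithmeticFunction.Moebius

/-- The contribution `∑_{m ≥ 2} (f p) ^ m / (m p ^ (m s))` of the higher powers of the prime `p` to
the logarithm of the Euler product of a completely multiplicative `f`, in closed form. -/
noncomputable def higherPowerTerm (f : ℕ → ℂ) (p : Nat.Primes) (s : ℂ) : ℂ :=
  -log (1 - f p * (p : ℂ) ^ (-s)) - f p * (p : ℂ) ^ (-s)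

/-- The contribution of all higher prime powers to the logarithm of the Euler product of a
completely multiplicative `f`. -/
noncomputable def higherPowerSeries (f : ℕ → ℂ) (s : ℂ) : ℂ := ∑' p, higherPowerTerm f p s

section

variable {f : ℕ → ℂ} {τ : ℝ} {s : ℂ}

lemma norm_mul_prime_cpow_neg_le (hf : ∀ n ≠ 0, ‖f n‖ ≤ 1) (hs : τ ≤ s.re) (p : Nat.Primes) :
    ‖f p * (p : ℂ) ^ (-s)‖ ≤ (p : ℝ) ^ (-τ) := by
  rw [norm_mul, norm_natCast_cpow_of_pos p.2.pos]
  exact (mul_le_of_le_one_left (by positivity) (hf p p.2.ne_zero)).trans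
    (Real.rpow_le_rpow_of_exponent_le (by exact_mod_cast p.2.one_le) (by simpa using hs))

lemma prime_rpow_neg_le_two_rpow_neg (hτ : 0 ≤ τ) (p : Nat.Primes) :
    (p : ℝ) ^ (-τ) ≤ 2 ^ (-τ) :=
  Real.rpow_le_rpow_of_nonpos two_pos (by exact_mod_cast p.2.two_le) (neg_nonpos.mpr hτ)

lemma two_rpow_neg_lt_one (hτ : 0 < τ) : (2 : ℝ) ^ (-τ) < 1 :=
  Real.rpow_lt_one_of_one_lt_of_neg one_lt_two (neg_neg_of_pos hτ)

lemma norm_higherPowerTerm_le (hf : ∀ n ≠ 0, ‖f n‖ ≤ 1) (hτ : 0 < τ) (hs : τ ≤ s.re)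
    (p : Nat.Primes) :
    ‖higherPowerTerm f p s‖ ≤ (1 - 2 ^ (-τ))⁻¹ / 2 * (p : ℝ) ^ (-(2 * τ)) := by
  set z := f p * (p : ℂ) ^ (-s) with hz
  have hz_le : ‖z‖ ≤ (p : ℝ) ^ (-τ) := norm_mul_prime_cpow_neg_le hf hs p
  have hz_two : ‖z‖ ≤ 2 ^ (-τ) := hz_le.trans (prime_rpow_neg_le_two_rpow_neg hτ.le p)
  have htwo : (0 : ℝ) < 1 - 2 ^ (-τ) := sub_pos.mpr (two_rpow_neg_lt_one hτ)
  calc ‖higherPowerTerm f p s‖ = ‖log (1 + -z) - -z‖ := by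
        rw [higherPowerTerm, ← hz, ← norm_neg]
        ring_nf
    _ ≤ ‖-z‖ ^ 2 * (1 - ‖-z‖)⁻¹ / 2 := norm_log_one_add_sub_self_le (by rw [norm_neg]; linarith)
    _ ≤ ((p : ℝ) ^ (-τ)) ^ 2 * (1 - 2 ^ (-τ))⁻¹ / 2 := by
        have hz_one : 0 < 1 - ‖z‖ := by linarith
        rw [norm_neg]
        gcongr
    _ = (1 - 2 ^ (-τ))⁻¹ / 2 * (p : ℝ) ^ (-(2 * τ)) := by
        rw [← Real.rpow_mul_natCast (by positivity)]
        push_cast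
        ring_nf

lemma summable_primes_const_mul_rpow (C : ℝ) (hτ : 1 / 2 < τ) :
    Summable fun p : Nat.Primes => C * (p : ℝ) ^ (-(2 * τ)) :=
  (Nat.Primes.summable_rpow.mpr (by linarith)).mul_left C

lemma differentiableAt_higherPowerTerm (hf : ∀ n ≠ 0, ‖f n‖ ≤ 1) (hs : 0 < s.re)
    (p : Nat.Primes) : DifferentiableAt ℂ (higherPowerTerm f p) s := by
  have hz : ‖f p * (p : ℂ) ^ (-s)‖ < 1 := (norm_mul_prime_cpow_neg_le hf le_rfl p).trans_lt
    ((prime_rpow_neg_le_two_rpow_neg hs.le p).trans_lt (two_rpow_neg_lt_one hs))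
  have hdiff : DifferentiableAt ℂ (fun s => f p * (p : ℂ) ^ (-s)) s :=
    (differentiableAt_id.neg.const_cpow (.inl (mod_cast p.2.ne_zero))).const_mul _
  refine ((hdiff.const_sub 1).clog ?_).neg.sub hdiff
  simpa [sub_eq_add_neg] using mem_slitPlane_of_norm_lt_one (z := -(f p * (p : ℂ) ^ (-s)))
    (by rwa [norm_neg])

lemma differentiableAt_higherPowerSeries (hf : ∀ n ≠ 0, ‖f n‖ ≤ 1) (hs : 1 / 2 < s.re) :
    DifferentiableAt ℂ (higherPowerSeries f) s := by
  obtain ⟨τ, hτ, hτs⟩ := exists_between hs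
  have hτ0 : 0 < τ := by linarith
  have hopen : IsOpen {z : ℂ | τ < z.re} := isOpen_lt continuous_const continuous_re
  exact (differentiableOn_tsum_of_summable_norm (summable_primes_const_mul_rpow _ hτ)
    (fun p z hz => (differentiableAt_higherPowerTerm hf (hτ0.trans hz) p).differentiableWithinAt)
    hopen fun p z hz => norm_higherPowerTerm_le hf hτ0 (le_of_lt hz) p).differentiableAt
    (hopen.mem_nhds hτs)

end

variable {f : ℕ →* ℂ} {s : ℂ}

/-- The summand `n ↦ f n * n ^ (-s)` of an L-series with completely multiplicative coefficients, as
a homomorphism of monoids with zero. -/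
noncomputable def LSeriesTermHom (f : ℕ →* ℂ) (hs : s ≠ 0) : ℕ →*₀ ℂ where
  toFun n := f n * (n : ℂ) ^ (-s)
  map_zero' := by simp [hs]
  map_one' := by simp
  map_mul' m n := by
    rw [map_mul, Nat.cast_mul, natCast_mul_natCast_cpow, mul_mul_mul_comm]

lemma term_eq_LSeriesTermHom (hs : s ≠ 0) (n : ℕ) : term f s n = LSeriesTermHom f hs n := by
  rcases eq_or_ne n 0 with rfl | hn
  · rw [term_zero, map_zero]
  · rw [term_of_ne_zero hn, div_eq_mul_inv, ← cpow_neg]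
    rfl

lemma LSeries_indicator_primes (f : ℕ → ℂ) (s : ℂ) :
    LSeries ({p | p.Prime}.indicator f) s = ∑' p : Nat.Primes, term f s p := by
  refine Eq.trans (tsum_congr fun n => ?_) (tsum_subtype {p : ℕ | p.Prime} (term f s)).symm
  by_cases hn : n ∈ {p : ℕ | p.Prime} <;> simp [term, hn]

theorem LSeries_eq_exp_LSeries_primes_add (hf : ∀ n ≠ 0, ‖f n‖ ≤ 1) (hs : 1 < s.re) :
    LSeries f s = exp (LSeries ({p | p.Prime}.indicator f) s + higherPowerSeries f s) := by
  have hs0 : s ≠ 0 := ne_zero_of_one_lt_re hs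
  have hterm : term f s = LSeriesTermHom f hs0 := funext (term_eq_LSeriesTermHom hs0)
  have hsum : Summable (LSeriesTermHom f hs0) := by
    rw [← hterm]
    exact LSeriesSummable_of_bounded_of_one_lt_re hf hs
  have hpow : Summable fun p : Nat.Primes => higherPowerTerm f p s :=
    .of_norm_bounded (summable_primes_const_mul_rpow _ (by norm_num))
      fun p => norm_higherPowerTerm_le hf one_pos hs.le p
  have hprimes : Summable fun p : Nat.Primes => LSeriesTermHom f hs0 p := hsum.subtype _
  rw [LSeries_indicator_primes, LSeries, hterm,
    ← EulerProduct.exp_tsum_primes_log_eq_tsum hsum.norm, higherPowerSeries,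
    ← hprimes.tsum_add hpow]
  exact congrArg exp (tsum_congr fun p => (add_sub_cancel _ _).symm)

lemma one_convolution_moebius : (1 : ℕ → ℂ) ⍟ ↗μ = δ := by
  have hone : ↗(1 : DirichletCharacter ℂ 1) = 1 :=
    funext fun n => MulChar.one_apply (isUnit_of_subsingleton _)
  simpa [hone] using DirichletCharacter.convolution_mul_moebius (1 : DirichletCharacter ℂ 1)

lemma mul_convolution_mul {R : Type*} [CommSemiring R] (f : ℕ →* R) (u v : ℕ → R) :
    (⇑f * u) ⍟ (⇑f * v) = ⇑f * (u ⍟ v) := by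
  ext n
  simp only [Pi.mul_apply, LSeries.convolution_def, Finset.mul_sum]
  refine Finset.sum_congr rfl fun p hp => ?_
  rw [← (Nat.mem_divisorsAntidiagonal.mp hp).1, map_mul]
  exact mul_mul_mul_comm ..

lemma norm_moebius_mul_le_one {f : ℕ → ℂ} (hf : ∀ n ≠ 0, ‖f n‖ ≤ 1) (n : ℕ) (hn : n ≠ 0) :
    ‖(μ n : ℂ) * f n‖ ≤ 1 := by
  rw [norm_mul, norm_intCast]
  exact mul_le_one₀ (mod_cast ArithmeticFunction.abs_moebius_le_one) (norm_nonneg _) (hf n hn)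

theorem LSeries_mul_LSeries_moebius_mul (hf : ∀ n ≠ 0, ‖f n‖ ≤ 1) (hs : 1 < s.re) :
    LSeries f s * LSeries (fun n => (μ n : ℂ) * f n) s = 1 := by
  have hconv : ⇑f ⍟ (fun n => (μ n : ℂ) * f n) = δ := by
    have h := mul_convolution_mul f 1 ↗μ
    rw [one_convolution_moebius, mul_one, LSeries.mul_delta (map_one f)] at h
    rwa [mul_comm] at h
  rw [← LSeries_convolution' (LSeriesSummable_of_bounded_of_one_lt_re hf hs)
    (LSeriesSummable_of_bounded_of_one_lt_re (norm_moebius_mul_le_one hf) hs), hconv, LSeries_delta]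
  rfl

theorem LSeries_moebius_mul_eq_exp (hf : ∀ n ≠ 0, ‖f n‖ ≤ 1) (hs : 1 < s.re) :
    LSeries (fun n => (μ n : ℂ) * f n) s =
      exp (LSeries (-{p : ℕ | p.Prime}.indicator f) s + -higherPowerSeries f s) := by
  rw [eq_inv_of_mul_eq_one_right (LSeries_mul_LSeries_moebius_mul hf hs),
    LSeries_eq_exp_LSeries_primes_add hf hs, ← exp_neg, neg_add, LSeries_neg]

end EulerProduct

theorem stmt_19_general (f : ℕ →* ℂ) (hf : ∀ n ≠ 0, ‖f n‖ ≤ 1) {σ : ℝ} (hσ : 1 / 2 < σ) (k : ℕ)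
    (c : ℂ)
    (hasymp : (fun x : ℝ => (∑ p ∈ Nat.primesBelow (⌊x⌋₊ + 1), f p)
        - c * (x ^ σ / iterLogProd k x : ℝ))
      =o[atTop] fun x : ℝ => x ^ σ / iterLogProd k x) :
    (0 < c.re → ∀ C : ℝ, ∃ N : ℕ, C < ‖∑ n ∈ Finset.Icc 1 N, f n‖) ∧
    (c.re < 0 → ∀ C : ℝ, ∃ N : ℕ,
      C < ‖∑ n ∈ Finset.Icc 1 N, (ArithmeticFunction.moebius n : ℂ) * f n‖) := by
  have hb (s : ℂ) (hs : 1 < s.re) : LSeriesSummable ({p | p.Prime}.indicator f) s :=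
    LSeriesSummable_of_bounded_of_one_lt_re
      (fun n hn => (norm_indicator_le_norm_self f n).trans (hf n hn)) hs
  have hH (s : ℂ) (hs : σ ≤ s.re) : DifferentiableAt ℂ (higherPowerSeries f) s :=
    differentiableAt_higherPowerSeries hf (hσ.trans_le hs)
  simp_rw [← summatory_indicator_primes] at hasymp
  refine ⟨fun hc => exists_lt_norm_sum_of_LSeries_eq_exp (by linarith)
    (fun s => LSeriesSummable_of_bounded_of_one_lt_re hf) hb hH
    (fun s => LSeries_eq_exp_LSeries_primes_add hf) hc hasymp, fun hc => ?_⟩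
  exact exists_lt_norm_sum_of_LSeries_eq_exp (c := -c) (by linarith)
    (fun s => LSeriesSummable_of_bounded_of_one_lt_re (norm_moebius_mul_le_one hf))
    (fun s hs => (hb s hs).neg) (fun s hs => (hH s hs).neg)
    (fun s => LSeries_moebius_mul_eq_exp hf) (by simpa using hc)
    (hasymp.neg_left.congr_left fun t => by rw [summatory_neg, Pi.neg_apply]; ring)

/-- If `f` is completely multiplicative with values in `{-1, 1}`, `1/2 < σ ≤ 1`, `k ≥ 1`,
`c ∈ [-1, 1]` is nonzero, and
`∑_{p ≤ x} f p = c·x^σ/(log x · log₂ x ··· log_k x)·(1 + o(1))`, where `log_j` is the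
`j`-fold iterated logarithm, then: if `c > 0` the partial sums of `f` are unbounded, and
if `c < 0` the partial sums of `μ·f` are unbounded. -/
theorem stmt_19 (f : ℕ → ℤ)
    (hf1 : f 1 = 1)
    (hfmul : ∀ a b : ℕ, f (a * b) = f a * f b)
    (hfpm : ∀ n : ℕ, 1 ≤ n → f n = 1 ∨ f n = -1)
    (σ : ℝ) (hσ : σ ∈ Set.Ioc (1 / 2 : ℝ) 1)
    (k : ℕ) (hk : 1 ≤ k)
    (c : ℝ) (hc : c ∈ Set.Icc (-1 : ℝ) 1) (hc0 : c ≠ 0)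
    (hasymp : (fun x : ℝ => (∑ p ∈ Nat.primesBelow (⌊x⌋₊ + 1), (f p : ℝ))
        - c * (x ^ σ / ∏ j ∈ Finset.Icc 1 k, Real.log^[j] x))
      =o[atTop] (fun x : ℝ => x ^ σ / ∏ j ∈ Finset.Icc 1 k, Real.log^[j] x)) :
    (0 < c → ∀ C : ℝ, ∃ N : ℕ, C < |((∑ n ∈ Finset.Icc 1 N, f n : ℤ) : ℝ)|) ∧
    (c < 0 → ∀ C : ℝ, ∃ N : ℕ,
      C < |((∑ n ∈ Finset.Icc 1 N, ArithmeticFunction.moebius n * f n : ℤ) : ℝ)|) := by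
  simp_rw [← Complex.norm_intCast, Int.cast_sum, Int.cast_mul]
  exact stmt_19_general ⟨⟨fun n => (f n : ℂ), by simp [hf1]⟩, fun m n => by simp [hfmul]⟩
    (fun n hn => by rcases hfpm n (by omega) with hn | hn <;> simp [hn]) hσ.1 k c
    ((Complex.isLittleO_ofReal_left.mpr hasymp).congr_left fun x => by simp [iterLogProd])
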